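/- Let k ≥ 5 be odd, a = (k+1)/2, and let L ⊆ ℤ⁴ be the ℤ-span of v₁ = (-a+1, a+1, -a+1, a), v₂ = (a+1, a+1, -a+2, a-1), v₃ = (-a-1, a-1, a-1, -a), v₄ = (-a, a, a, a-1). Then for every x ∈ ℤ⁴ all of whose coordinates have absolute value at most a + 1, there exists w ∈ L with ‖x - w‖₁ ≤ k, where ‖y‖₁ = |y₁| + |y₂| + |y₃| + |y₄|. -/

import Mathlib

/-!
Put `k = 2a - 1`. The lattice `L` contains, with index two, a lattice with a nearly orthogonal
basis `b₀, …, b₃`: its matrix is `diag(2a, 2a, 2a - 1, 2a - 1)` plus a skew-symmetric matrix with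
entries in `{-1, 0, 1}`. The other coset contains the glue vectors `½ ∑ i, ± b i`, one in each of
the sixteen orthants, and by skew symmetry each of them has `ℓ¹` norm `½ tr = 4a - 1 = 2k + 1`.
Hence a point of the box spanned by `0` and a glue vector `u` is within `ℓ¹`-distance `k` of `0`
or of `u`.

Given `x`, subtract a lattice point nearest to it in the Euclidean norm. The resulting `y`
satisfies the Voronoi inequalities `2 (v ⬝ᵥ y) ≤ v ⬝ᵥ v` for `v ∈ L`, and those for `± b i` almost
place `y` in the box of its orthant. The exceptions have a zero coordinate, and lie in the box of
an adjacent orthant, or are within distance `k` of `± b i` itself.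
-/

section NearestPoint

open Matrix

variable {ι : Type*} [Fintype ι]

/-- The `ℓ¹` norm on `ℤ^ι`. -/
def l1Norm (y : ι → ℤ) : ℤ := ∑ i, |y i|

theorem l1Norm_neg (y : ι → ℤ) : l1Norm (-y) = l1Norm y := by
  simp [l1Norm]

theorem l1Norm_comp_equiv (σ : Equiv.Perm ι) (y : ι → ℤ) : l1Norm (y ∘ σ) = l1Norm y :=
  Equiv.sum_comp σ fun i => |y i|

theorem l1Norm_add_l1Norm_sub {y u : ι → ℤ} (h : ∀ i, y i ∈ Set.uIcc 0 (u i)) :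
    l1Norm y + l1Norm (y - u) = l1Norm u := by
  simp only [l1Norm, ← Finset.sum_add_distrib]
  refine Finset.sum_congr rfl fun i _ => ?_
  rw [Pi.sub_apply, abs_sub_comm]
  simpa using ((abs_add_eq_add_abs_iff (y i) (u i - y i)).2 (by
    rcases Set.mem_uIcc.1 (h i) with h | h <;> omega)).symm

-- The witness `w` is a point of `L` nearest to `x` in the Euclidean norm.
theorem exists_forall_two_mul_dotProduct_le (L : Submodule ℤ (ι → ℤ)) (x : ι → ℤ) :
    ∃ w ∈ L, ∀ v ∈ L, 2 * (v ⬝ᵥ (x - w)) ≤ v ⬝ᵥ v := by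
  obtain ⟨w, hw, hmin⟩ := exists_minimalFor_of_wellFoundedLT (· ∈ L)
    (fun w => ((x - w) ⬝ᵥ (x - w)).toNat) ⟨0, L.zero_mem⟩
  refine ⟨w, hw, fun v hv => ?_⟩
  have nonneg (z : ι → ℤ) : 0 ≤ z ⬝ᵥ z := by simpa using dotProduct_star_self_nonneg z
  have nearest : (x - w) ⬝ᵥ (x - w) ≤ (x - w - v) ⬝ᵥ (x - w - v) := by
    have hle : ((x - w) ⬝ᵥ (x - w)).toNat ≤ ((x - (w + v)) ⬝ᵥ (x - (w + v))).toNat :=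
      (le_total _ _).elim (hmin (L.add_mem hw hv)) id
    rw [sub_sub]
    have := nonneg (x - (w + v))
    omega
  have expand : (x - w - v) ⬝ᵥ (x - w - v) =
      (x - w) ⬝ᵥ (x - w) - 2 * (v ⬝ᵥ (x - w)) + v ⬝ᵥ v := by
    rw [sub_dotProduct, dotProduct_sub (x - w), dotProduct_sub v, dotProduct_comm (x - w) v]
    ring
  linarith

end NearestPoint

section Covering

open Matrix

/-- The lattice `L_k` for odd `k`, in terms of `a = (k + 1) / 2`. -/
def oddLattice (a : ℤ) : Submodule ℤ (Fin 4 → ℤ) :=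
  Submodule.span ℤ {![-a + 1, a + 1, -a + 1, a], ![a + 1, a + 1, -a + 2, a - 1],
    ![-a - 1, a - 1, a - 1, -a], ![-a, a, a, a - 1]}

/-- The rows form a nearly orthogonal basis of an index-two sublattice of `L`: the matrix is the
sum of a positive diagonal matrix and a skew-symmetric one with entries in `{-1, 0, 1}`. -/
def skewFrame (a : ℤ) : Matrix (Fin 4) (Fin 4) ℤ :=
  !![2 * a, 0, 1, -1;
     0, 2 * a, 1, -1;
     -1, -1, 2 * a - 1, -1;
     1, 1, 1, 2 * a - 1]

/-- The glue vector of the orthant with signs `(-1) ^ c i`, for `c ∈ {0, 1}⁴`: the half-sum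
`½ ∑ i, (-1) ^ c i • skewFrame a i`, which lies in `L`. -/
def glueVector (a : ℤ) (c : Fin 4 → ℤ) : Fin 4 → ℤ :=
  ![a, a, a + 1, a - 2] - c ᵥ* skewFrame a

section Lattice

variable {a : ℤ}

theorem glueVector_eq (a : ℤ) (c : Fin 4 → ℤ) : glueVector a c =
    ![(1 - 2 * c 0) * a + c 2 - c 3,
      (1 - 2 * c 1) * a + c 2 - c 3,
      (1 - 2 * c 2) * a + 1 - c 0 - c 1 + c 2 - c 3,
      (1 - 2 * c 3) * a - 2 + c 0 + c 1 + c 2 + c 3] := by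
  ext i
  fin_cases i <;> simp [glueVector, skewFrame, vecMul_eq_sum, Fin.sum_univ_four] <;> ring

theorem mem_oddLattice_of_eq {v : Fin 4 → ℤ} (m₁ m₂ m₃ m₄ : ℤ)
    (h : v = m₁ • ![-a + 1, a + 1, -a + 1, a] + m₂ • ![a + 1, a + 1, -a + 2, a - 1] +
      m₃ • ![-a - 1, a - 1, a - 1, -a] + m₄ • ![-a, a, a, a - 1]) : v ∈ oddLattice a := by
  subst h
  refine add_mem (add_mem (add_mem ?_ ?_) ?_) ?_ <;>
    exact Submodule.smul_mem _ _ (Submodule.subset_span (by simp))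

theorem skewFrame_mem_oddLattice (i : Fin 4) : skewFrame a i ∈ oddLattice a := by
  fin_cases i
  · exact mem_oddLattice_of_eq (-1) 1 0 0 (by ext j; fin_cases j <;> simp [skewFrame] <;> ring)
  · exact mem_oddLattice_of_eq 0 1 1 0 (by ext j; fin_cases j <;> simp [skewFrame] <;> ring)
  · exact mem_oddLattice_of_eq (-1) 0 0 1 (by ext j; fin_cases j <;> simp [skewFrame] <;> ring)
  · exact mem_oddLattice_of_eq 0 0 (-1) 1 (by ext j; fin_cases j <;> simp [skewFrame]; ring)

theorem skewFrame_mulVec (y : Fin 4 → ℤ) : skewFrame a *ᵥ y =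
    ![2 * a * y 0 + y 2 - y 3,
      2 * a * y 1 + y 2 - y 3,
      (2 * a - 1) * y 2 - y 0 - y 1 - y 3,
      (2 * a - 1) * y 3 + y 0 + y 1 + y 2] := by
  ext i
  fin_cases i <;> simp [skewFrame, mulVec, dotProduct, Fin.sum_univ_four] <;> ring

theorem skewFrame_dotProduct_self (i : Fin 4) : skewFrame a i ⬝ᵥ skewFrame a i =
    2 * ![2 * a ^ 2 + 1, 2 * a ^ 2 + 1, 2 * a ^ 2 - 2 * a + 2, 2 * a ^ 2 - 2 * a + 2] i := by
  fin_cases i <;> simp [skewFrame, dotProduct, Fin.sum_univ_four] <;> ring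

theorem glueVector_mem_oddLattice (c : Fin 4 → ℤ) : glueVector a c ∈ oddLattice a := by
  refine sub_mem (mem_oddLattice_of_eq (-1) 1 0 1 ?_) ?_
  · ext j
    fin_cases j <;> simp <;> ring
  · rw [vecMul_eq_sum]
    exact sum_mem fun i _ => Submodule.smul_mem _ _ (skewFrame_mem_oddLattice i)

theorem l1Norm_glueVector (ha : 2 ≤ a) {c : Fin 4 → ℤ} (hc : ∀ i, c i = 0 ∨ c i = 1) :
    l1Norm (glueVector a c) = 4 * a - 1 := by
  obtain ⟨h₀, h₁, h₂, h₃⟩ : (c 0 = 0 ∨ c 0 = 1) ∧ (c 1 = 0 ∨ c 1 = 1) ∧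
      (c 2 = 0 ∨ c 2 = 1) ∧ (c 3 = 0 ∨ c 3 = 1) := ⟨hc 0, hc 1, hc 2, hc 3⟩
  have hsign (i : Fin 4) :
      c i = 0 ∧ 0 ≤ glueVector a c i ∨ c i = 1 ∧ glueVector a c i ≤ 0 := by
    rw [glueVector_eq]
    fin_cases i
    · rcases h₀ with h | h <;> simp [h] <;> omega
    · rcases h₁ with h | h <;> simp [h] <;> omega
    · rcases h₂ with h | h <;> simp [h] <;> omega
    · rcases h₃ with h | h <;> simp [h] <;> omega
  have habs (i : Fin 4) : |glueVector a c i| = (1 - 2 * c i) * glueVector a c i := by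
    rcases hsign i with ⟨h, hu⟩ | ⟨h, hu⟩
    · simp [h, abs_of_nonneg hu]
    · simp [h, abs_of_nonpos hu]
  have hsq (i : Fin 4) : c i * c i = c i := by rcases hc i with h | h <;> simp [h]
  simp only [l1Norm, habs]
  simp only [glueVector_eq, Fin.sum_univ_four, cons_val]
  linear_combination 4 * a * (hsq 0 + hsq 1 + hsq 2 + hsq 3) - 2 * (hsq 2 + hsq 3)

theorem comp_swap_eq (v : Fin 4 → ℤ) :
    v ∘ Equiv.swap 0 1 = ![v 1, v 0, v 2, v 3] := by
  ext i
  fin_cases i <;> rfl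

theorem comp_swap_mem_oddLattice {v : Fin 4 → ℤ} (hv : v ∈ oddLattice a) :
    v ∘ Equiv.swap 0 1 ∈ oddLattice a := by
  induction hv using Submodule.span_induction with
  | mem v hv =>
    rw [comp_swap_eq]
    rcases hv with rfl | rfl | rfl | rfl
    · exact mem_oddLattice_of_eq 0 0 (-1) 0 (by ext i; fin_cases i <;> simp <;> ring)
    · exact mem_oddLattice_of_eq 0 1 0 0 (by ext i; fin_cases i <;> simp)
    · exact mem_oddLattice_of_eq (-1) 0 0 0 (by ext i; fin_cases i <;> simp <;> ring)
    · exact mem_oddLattice_of_eq (-1) 0 (-1) 1 (by ext i; fin_cases i <;> simp <;> ring)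
  | zero => exact zero_mem _
  | add v w _ _ hv hw => exact add_mem hv hw
  | smul m v _ hv => exact Submodule.smul_mem _ m hv

end Lattice

/-- A point `y` for which `0` is a nearest point of `L` in the Euclidean norm, although every point
of `L` has `ℓ¹`-distance more than `k = 2a - 1` from `y`. -/
structure IsHole (a : ℤ) (y : Fin 4 → ℤ) : Prop where
  voronoi : ∀ v ∈ oddLattice a, 2 * (v ⬝ᵥ y) ≤ v ⬝ᵥ v
  far : ∀ v ∈ oddLattice a, 2 * a ≤ l1Norm (y - v)

namespace IsHole

variable {a : ℤ} {y : Fin 4 → ℤ}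

theorem neg (hy : IsHole a y) : IsHole a (-y) where
  voronoi v hv := by simpa using hy.voronoi (-v) (neg_mem hv)
  far v hv := by
    rw [← l1Norm_neg, neg_sub, sub_neg_eq_add, add_comm, ← sub_neg_eq_add]
    exact hy.far (-v) (neg_mem hv)

theorem swap (hy : IsHole a y) : IsHole a (y ∘ Equiv.swap 0 1) where
  voronoi v hv := by
    have h := hy.voronoi _ (comp_swap_mem_oddLattice hv)
    rwa [comp_equiv_dotProduct_comp_equiv, ← Equiv.symm_swap, comp_equiv_symm_dotProduct] at h
  far v hv := by
    have hcomp : (y ∘ Equiv.swap 0 1 - v) ∘ Equiv.swap 0 1 = y - v ∘ Equiv.swap 0 1 := by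
      ext i; simp
    rw [← l1Norm_comp_equiv (Equiv.swap 0 1), hcomp]
    exact hy.far _ (comp_swap_mem_oddLattice hv)

theorem not_forall_mem_uIcc_glueVector (hy : IsHole a y) (ha : 2 ≤ a) (c : Fin 4 → ℤ)
    (hc : ∀ i, c i = 0 ∨ c i = 1) : ¬ ∀ i, y i ∈ Set.uIcc 0 (glueVector a c i) := by
  intro hmem
  have hsum := l1Norm_add_l1Norm_sub hmem
  have hzero := hy.far 0 (zero_mem _)
  have hglue := hy.far _ (glueVector_mem_oddLattice c)
  rw [l1Norm_glueVector ha hc] at hsum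
  rw [sub_zero] at hzero
  omega

theorem skewFrame_mulVec_le (hy : IsHole a y) (i : Fin 4) : (skewFrame a *ᵥ y) i ≤
    ![2 * a ^ 2 + 1, 2 * a ^ 2 + 1, 2 * a ^ 2 - 2 * a + 2, 2 * a ^ 2 - 2 * a + 2] i := by
  have h := hy.voronoi _ (skewFrame_mem_oddLattice i)
  rw [skewFrame_dotProduct_self] at h
  exact le_of_mul_le_mul_left h two_pos

-- The Voronoi inequalities are quadratic in `a` and `y`; fixing the amount `j` by which a
-- coordinate exceeds `a` makes them linear, for each numeral `j`.
theorem excess_le₀ (hy : IsHole a y) (ha : 0 ≤ a) {j : ℤ} (h : a + j ≤ y 0) :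
    2 * a * j + y 2 - y 3 ≤ 1 := by
  have hvor : 2 * a * y 0 + y 2 - y 3 ≤ 2 * a ^ 2 + 1 := by
    simpa [skewFrame_mulVec] using hy.skewFrame_mulVec_le 0
  have hmul := mul_le_mul_of_nonneg_left h (show 0 ≤ 2 * a by omega)
  linarith

theorem excess_le₁ (hy : IsHole a y) (ha : 0 ≤ a) {j : ℤ} (h : a + j ≤ y 1) :
    2 * a * j + y 2 - y 3 ≤ 1 :=
  hy.swap.excess_le₀ ha h

theorem excess_le₂ (hy : IsHole a y) (ha : 1 ≤ a) {j : ℤ} (h : a + j ≤ y 2) :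
    (2 * a - 1) * j - y 0 - y 1 - y 3 ≤ 2 - a := by
  have hvor : (2 * a - 1) * y 2 - y 0 - y 1 - y 3 ≤ 2 * a ^ 2 - 2 * a + 2 := by
    simpa [skewFrame_mulVec] using hy.skewFrame_mulVec_le 2
  have hmul := mul_le_mul_of_nonneg_left h (show 0 ≤ 2 * a - 1 by omega)
  linarith

theorem excess_le₃ (hy : IsHole a y) (ha : 1 ≤ a) {j : ℤ} (h : a + j ≤ y 3) :
    (2 * a - 1) * j + y 0 + y 1 + y 2 ≤ 2 - a := by
  have hvor : (2 * a - 1) * y 3 + y 0 + y 1 + y 2 ≤ 2 * a ^ 2 - 2 * a + 2 := by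
    simpa [skewFrame_mulVec] using hy.skewFrame_mulVec_le 3
  have hmul := mul_le_mul_of_nonneg_left h (show 0 ≤ 2 * a - 1 by omega)
  linarith

theorem far_skewFrame_three (hy : IsHole a y) (h₀ : 1 ≤ y 0) (h₁ : 1 ≤ y 1) (h₂ : 1 ≤ y 2)
    (h₃ : y 3 ≤ 2 * a - 1) : 4 ≤ y 0 + y 1 + y 2 - y 3 := by
  have hfar : 2 * a ≤ |y 0 - 1| + |y 1 - 1| + |y 2 - 1| + |y 3 - (2 * a - 1)| := by
    simpa [skewFrame, l1Norm, Fin.sum_univ_four] using hy.far _ (skewFrame_mem_oddLattice 3)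
  rw [abs_of_nonneg (by omega), abs_of_nonneg (by omega), abs_of_nonneg (by omega),
    abs_of_nonpos (by omega)] at hfar
  omega

theorem far_neg_skewFrame_two (hy : IsHole a y) (h₀ : 1 ≤ y 0) (h₁ : 1 ≤ y 1)
    (h₂ : -(2 * a - 1) ≤ y 2) (h₃ : 1 ≤ y 3) : 4 ≤ y 0 + y 1 + y 2 + y 3 := by
  have hfar : 2 * a ≤ |y 0 - 1| + |y 1 - 1| + |y 2 + (2 * a - 1)| + |y 3 - 1| := by
    simpa [skewFrame, l1Norm, Fin.sum_univ_four, ← sub_eq_add_neg] using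
      hy.far _ (neg_mem (skewFrame_mem_oddLattice 2))
  rw [abs_of_nonneg (by omega), abs_of_nonneg (by omega), abs_of_nonneg (by omega),
    abs_of_nonneg (by omega)] at hfar
  omega

theorem excess_le₁_neg (hy : IsHole a y) (ha : 0 ≤ a) {j : ℤ} (h : y 1 ≤ -(a + j)) :
    2 * a * j - y 2 + y 3 ≤ 1 := by
  simpa [← sub_eq_add_neg] using hy.neg.excess_le₁ ha (le_neg_of_le_neg h)

theorem excess_le₂_neg (hy : IsHole a y) (ha : 1 ≤ a) {j : ℤ} (h : y 2 ≤ -(a + j)) :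
    (2 * a - 1) * j + y 0 + y 1 + y 3 ≤ 2 - a := by
  simpa using hy.neg.excess_le₂ ha (le_neg_of_le_neg h)

theorem excess_le₃_neg (hy : IsHole a y) (ha : 1 ≤ a) {j : ℤ} (h : y 3 ≤ -(a + j)) :
    (2 * a - 1) * j - y 0 - y 1 - y 2 ≤ 2 - a := by
  simpa [← sub_eq_add_neg] using hy.neg.excess_le₃ ha (le_neg_of_le_neg h)

theorem notMem_box (hy : IsHole a y) (ha : 2 ≤ a) (c₀ c₁ c₂ c₃ : ℤ)
    (hc : ∀ i, ![c₀, c₁, c₂, c₃] i = 0 ∨ ![c₀, c₁, c₂, c₃] i = 1) :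
    ¬((0 ≤ y 0 ∧ y 0 ≤ (1 - 2 * c₀) * a + c₂ - c₃ ∨ (1 - 2 * c₀) * a + c₂ - c₃ ≤ y 0 ∧ y 0 ≤ 0) ∧
      (0 ≤ y 1 ∧ y 1 ≤ (1 - 2 * c₁) * a + c₂ - c₃ ∨ (1 - 2 * c₁) * a + c₂ - c₃ ≤ y 1 ∧ y 1 ≤ 0) ∧
      (0 ≤ y 2 ∧ y 2 ≤ (1 - 2 * c₂) * a + 1 - c₀ - c₁ + c₂ - c₃ ∨
        (1 - 2 * c₂) * a + 1 - c₀ - c₁ + c₂ - c₃ ≤ y 2 ∧ y 2 ≤ 0) ∧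
      (0 ≤ y 3 ∧ y 3 ≤ (1 - 2 * c₃) * a - 2 + c₀ + c₁ + c₂ + c₃ ∨
        (1 - 2 * c₃) * a - 2 + c₀ + c₁ + c₂ + c₃ ≤ y 3 ∧ y 3 ≤ 0)) := by
  simpa [Fin.forall_fin_succ, glueVector_eq, Set.mem_uIcc] using
    hy.not_forall_mem_uIcc_glueVector ha ![c₀, c₁, c₂, c₃] hc

-- In the names below `p` and `m` record the signs, `≥ 0` or `≤ 0`, of the successive coordinates.
theorem not_signs_pppp (hy : IsHole a y) (ha : 3 ≤ a) :
    ¬(0 ≤ y 0 ∧ 0 ≤ y 1 ∧ 0 ≤ y 2 ∧ 0 ≤ y 3) := by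
  rintro ⟨h₀, h₁, h₂, h₃⟩
  have hy₃ : y 3 ≤ a - 1 := by
    have := hy.excess_le₃ (j := 0) (by omega)
    omega
  have hy₀ : y 0 ≤ a := by
    have := hy.excess_le₀ (j := 1) (by omega)
    omega
  have hy₁ : y 1 ≤ a := by
    have := hy.excess_le₁ (j := 1) (by omega)
    omega
  have hy₂ : y 2 ≤ a + 1 := by
    have := hy.excess_le₂ (j := 2) (by omega)
    omega
  have hcases : y 3 ≤ a - 2 ∨ y 2 ≤ a ∧ (y 0 = 0 ∨ y 1 = 0 ∨ y 2 = 0) := by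
    have := hy.excess_le₂ (j := 1) (by omega)
    have := hy.excess_le₃ (j := -1) (by omega)
    have := hy.far_skewFrame_three
    omega
  rcases hcases with h | ⟨_, h | h | h⟩
  · exact hy.notMem_box (by omega) 0 0 0 0 (by decide) (by omega)
  · exact hy.notMem_box (by omega) 1 0 0 0 (by decide) (by omega)
  · exact hy.notMem_box (by omega) 0 1 0 0 (by decide) (by omega)
  · exact hy.notMem_box (by omega) 0 0 1 0 (by decide) (by omega)

theorem not_signs_pppm (hy : IsHole a y) (ha : 3 ≤ a) :
    ¬(0 ≤ y 0 ∧ 0 ≤ y 1 ∧ 0 ≤ y 2 ∧ y 3 ≤ 0) := by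
  rintro ⟨h₀, h₁, h₂, h₃⟩
  have hy₀ : y 0 ≤ a - 1 ∨ y 0 = a ∧ y 2 - y 3 ≤ 1 := by
    have := hy.excess_le₀ (j := 0) (by omega)
    have := hy.excess_le₀ (j := 1) (by omega)
    omega
  have hy₁ : y 1 ≤ a - 1 ∨ y 1 = a ∧ y 2 - y 3 ≤ 1 := by
    have := hy.excess_le₁ (j := 0) (by omega)
    have := hy.excess_le₁ (j := 1) (by omega)
    omega
  have hy₂ : y 2 ≤ a := by
    have := hy.excess_le₂ (j := 1) (by omega)
    omega
  have hy₃ : -(a + 1) ≤ y 3 := by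
    have := hy.excess_le₃_neg (j := 2) (by omega)
    omega
  have hcases : (y 0 ≤ a - 1 ∧ y 1 ≤ a - 1) ∨ y 2 = 0 ∧ -1 ≤ y 3 ∨ y 3 = 0 ∧ y 2 ≤ 1 := by omega
  rcases hcases with h | h | h
  · exact hy.notMem_box (by omega) 0 0 0 1 (by decide) (by omega)
  · exact hy.notMem_box (by omega) 0 0 1 1 (by decide) (by omega)
  · exact hy.notMem_box (by omega) 0 0 0 0 (by decide) (by omega)

theorem not_signs_ppmp (hy : IsHole a y) (ha : 3 ≤ a) :
    ¬(0 ≤ y 0 ∧ 0 ≤ y 1 ∧ y 2 ≤ 0 ∧ 0 ≤ y 3) := by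
  rintro ⟨h₀, h₁, h₂, h₃⟩
  have hy₂ : -(a - 1) ≤ y 2 := by
    have := hy.excess_le₂_neg (j := 0) (by omega)
    omega
  have hy₃ : y 3 ≤ a - 1 ∨ y 3 = a ∧ y 0 + y 1 ≤ 1 := by
    have := hy.excess_le₃ (j := 0) (by omega)
    have := hy.excess_le₃ (j := 1) (by omega)
    omega
  have hy₀ : y 0 ≤ a + 1 := by
    have := hy.excess_le₀ (j := 2) (by omega)
    omega
  have hy₁ : y 1 ≤ a + 1 := by
    have := hy.excess_le₁ (j := 2) (by omega)
    omega
  have hcases : -(a - 2) ≤ y 2 ∧ y 3 ≤ a - 1 ∨ y 0 = 0 ∨ y 1 = 0 ∨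
      y 3 = 0 ∧ y 0 ≤ a ∧ y 1 ≤ a := by
    have := hy.excess_le₀ (j := 1) (by omega)
    have := hy.excess_le₁ (j := 1) (by omega)
    have := hy.excess_le₂_neg (j := -1) (by omega)
    have := hy.far_neg_skewFrame_two
    omega
  rcases hcases with h | h | h | h
  · exact hy.notMem_box (by omega) 0 0 1 0 (by decide) (by omega)
  · exact hy.notMem_box (by omega) 1 0 1 0 (by decide) (by omega)
  · exact hy.notMem_box (by omega) 0 1 1 0 (by decide) (by omega)
  · exact hy.notMem_box (by omega) 0 0 1 1 (by decide) (by omega)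

theorem not_signs_ppmm (hy : IsHole a y) (ha : 3 ≤ a) :
    ¬(0 ≤ y 0 ∧ 0 ≤ y 1 ∧ y 2 ≤ 0 ∧ y 3 ≤ 0) := by
  rintro ⟨h₀, h₁, h₂, h₃⟩
  have hz := hy.excess_le₂_neg (j := 0) (by omega)
  have hy₃ : -a ≤ y 3 := by
    have := hy.excess_le₀ (j := 0) (by omega)
    have := hy.excess_le₁ (j := 0) (by omega)
    have := hy.excess_le₃_neg (j := 1) (by omega)
    omega
  have hy₀ : y 0 ≤ a := by
    have := hy.excess_le₀ (j := 1) (by omega)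
    omega
  have hy₁ : y 1 ≤ a := by
    have := hy.excess_le₁ (j := 1) (by omega)
    omega
  have hcases : -(a - 1) ≤ y 2 ∨ y 2 = -a ∧ -(a - 1) ≤ y 3 ∧ (y 0 = 0 ∨ y 1 = 0) := by
    have := hy.excess_le₂_neg (j := 1) (by omega)
    have := hy.excess_le₃_neg (j := 0) (by omega)
    omega
  rcases hcases with h | ⟨_, _, h | h⟩
  · exact hy.notMem_box (by omega) 0 0 1 1 (by decide) (by omega)
  · exact hy.notMem_box (by omega) 1 0 1 1 (by decide) (by omega)
  · exact hy.notMem_box (by omega) 0 1 1 1 (by decide) (by omega)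

theorem not_signs_pmpp (hy : IsHole a y) (ha : 3 ≤ a) :
    ¬(0 ≤ y 0 ∧ y 1 ≤ 0 ∧ 0 ≤ y 2 ∧ 0 ≤ y 3) := by
  rintro ⟨h₀, h₁, h₂, h₃⟩
  have ht := hy.excess_le₃ (j := 0) (by omega)
  have hz := hy.excess_le₂ (j := 1) (by omega)
  have hy₃ : y 3 ≤ a := by
    have := hy.excess_le₁_neg (j := 1) (by omega)
    have := hy.excess_le₃ (j := 1) (by omega)
    omega
  have hy₀ : y 0 ≤ a := by
    have := hy.excess_le₀ (j := 1) (by omega)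
    omega
  have hy₁ : -a ≤ y 1 := by
    have := hy.excess_le₁_neg (j := 1) (by omega)
    omega
  have hy₂ : y 2 ≤ a := by omega
  have hcases : y 3 ≤ a - 1 ∨ y 0 = 0 ∧ y 2 ≤ a - 1 ∨ y 2 = 0 ∧ -(a - 1) ≤ y 1 := by
    have := hy.excess_le₁_neg (j := 0) (by omega)
    omega
  rcases hcases with h | h | h
  · exact hy.notMem_box (by omega) 0 1 0 0 (by decide) (by omega)
  · exact hy.notMem_box (by omega) 1 1 0 0 (by decide) (by omega)
  · exact hy.notMem_box (by omega) 0 1 1 0 (by decide) (by omega)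

theorem not_signs_pmpm (hy : IsHole a y) (ha : 3 ≤ a) :
    ¬(0 ≤ y 0 ∧ y 1 ≤ 0 ∧ 0 ≤ y 2 ∧ y 3 ≤ 0) := by
  rintro ⟨h₀, h₁, h₂, h₃⟩
  have hy₀ : y 0 ≤ a - 1 ∨ y 0 = a ∧ y 2 - y 3 ≤ 1 := by
    have := hy.excess_le₀ (j := 0) (by omega)
    have := hy.excess_le₀ (j := 1) (by omega)
    omega
  have hy₂ : y 2 ≤ a - 1 ∨ y 2 = a ∧ a - 2 ≤ y 0 + y 1 + y 3 := by
    have := hy.excess_le₂ (j := 0) (by omega)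
    have := hy.excess_le₂ (j := 1) (by omega)
    omega
  have hy₃ : -a ≤ y 3 := by
    have := hy.excess_le₃_neg (j := 1) (by omega)
    omega
  have hy₁ : -a ≤ y 1 ∨ y 1 = -(a + 1) ∧ 2 * a - 1 ≤ y 2 - y 3 := by
    have := hy.excess_le₁_neg (j := 1) (by omega)
    have := hy.excess_le₁_neg (j := 2) (by omega)
    omega
  have hcases : y 0 ≤ a - 1 ∧ y 2 ≤ a - 1 ∨ y 3 = 0 ∧ -a ≤ y 1 ∨ y 1 = 0 ∧ y 0 ≤ a - 1 ∨
      y 2 = 0 ∧ -a ≤ y 1 ∧ -(a - 1) ≤ y 3 := by omega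
  rcases hcases with h | h | h | h
  · exact hy.notMem_box (by omega) 0 1 0 1 (by decide) (by omega)
  · exact hy.notMem_box (by omega) 0 1 0 0 (by decide) (by omega)
  · exact hy.notMem_box (by omega) 0 0 0 1 (by decide) (by omega)
  · exact hy.notMem_box (by omega) 0 1 1 1 (by decide) (by omega)

end IsHole

theorem not_isHole {a : ℤ} (ha : 3 ≤ a) (y : Fin 4 → ℤ) : ¬IsHole a y := by
  suffices key : ∀ y, IsHole a y → ¬0 ≤ y 0 from fun hy =>
    (le_total 0 (y 0)).elim (key y hy) fun h => key (-y) hy.neg (neg_nonneg.2 h)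
  intro y hy h₀
  rcases le_total 0 (y 1) with h₁ | h₁ <;> rcases le_total 0 (y 2) with h₂ | h₂ <;>
    rcases le_total 0 (y 3) with h₃ | h₃
  · exact hy.not_signs_pppp ha ⟨h₀, h₁, h₂, h₃⟩
  · exact hy.not_signs_pppm ha ⟨h₀, h₁, h₂, h₃⟩
  · exact hy.not_signs_ppmp ha ⟨h₀, h₁, h₂, h₃⟩
  · exact hy.not_signs_ppmm ha ⟨h₀, h₁, h₂, h₃⟩
  · exact hy.not_signs_pmpp ha ⟨h₀, h₁, h₂, h₃⟩
  · exact hy.not_signs_pmpm ha ⟨h₀, h₁, h₂, h₃⟩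
  · exact hy.neg.swap.not_signs_pmpm ha (by simpa [comp_swap_eq] using ⟨h₁, h₀, h₂, h₃⟩)
  · exact hy.neg.swap.not_signs_pmpp ha (by simpa [comp_swap_eq] using ⟨h₁, h₀, h₂, h₃⟩)

theorem exists_mem_oddLattice_l1Norm_sub_le {a : ℤ} (ha : 3 ≤ a) (x : Fin 4 → ℤ) :
    ∃ w ∈ oddLattice a, l1Norm (x - w) ≤ 2 * a - 1 := by
  obtain ⟨w, hw, hvor⟩ := exists_forall_two_mul_dotProduct_le (oddLattice a) x
  by_contra! hfar
  refine not_isHole ha (x - w) ⟨hvor, fun v hv => ?_⟩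
  have := hfar (w + v) (add_mem hw hv)
  rw [sub_sub]
  omega

end Covering

theorem lattice_box_covered_odd_general (k a : ℤ) (hk : 5 ≤ k) (hko : Odd k) (ha : a = (k + 1) / 2)
    (v₁ v₂ v₃ v₄ : Fin 4 → ℤ)
    (hv₁ : v₁ = ![-a + 1, a + 1, -a + 1, a])
    (hv₂ : v₂ = ![a + 1, a + 1, -a + 2, a - 1])
    (hv₃ : v₃ = ![-a - 1, a - 1, a - 1, -a])
    (hv₄ : v₄ = ![-a, a, a, a - 1])
    (L : Submodule ℤ (Fin 4 → ℤ))
    (hL : L = Submodule.span ℤ {v₁, v₂, v₃, v₄}) (x : Fin 4 → ℤ) :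
    ∃ w ∈ L, |x 0 - w 0| + |x 1 - w 1| + |x 2 - w 2| + |x 3 - w 3| ≤ k := by
  obtain ⟨m, rfl⟩ := hko
  obtain rfl : a = m + 1 := by omega
  subst hv₁ hv₂ hv₃ hv₄ hL
  obtain ⟨w, hw, hle⟩ := exists_mem_oddLattice_l1Norm_sub_le (a := m + 1) (by omega) x
  refine ⟨w, hw, ?_⟩
  simp only [l1Norm, Fin.sum_univ_four, Pi.sub_apply] at hle
  omega

/-- For odd `k ≥ 5`, `a = (k+1)/2`, every point of `ℤ⁴` whose coordinates all have
absolute value at most `a + 1` is within `l¹`-distance `k` of the lattice `L`. -/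
theorem lattice_box_covered_odd (k a : ℤ) (hk : 5 ≤ k) (hko : Odd k) (ha : a = (k + 1) / 2)
    (v₁ v₂ v₃ v₄ : Fin 4 → ℤ)
    (hv₁ : v₁ = ![-a + 1, a + 1, -a + 1, a])
    (hv₂ : v₂ = ![a + 1, a + 1, -a + 2, a - 1])
    (hv₃ : v₃ = ![-a - 1, a - 1, a - 1, -a])
    (hv₄ : v₄ = ![-a, a, a, a - 1])
    (L : Submodule ℤ (Fin 4 → ℤ))
    (hL : L = Submodule.span ℤ {v₁, v₂, v₃, v₄}) :
    ∀ x : Fin 4 → ℤ, (∀ i : Fin 4, |x i| ≤ a + 1) →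
      ∃ w ∈ L, |x 0 - w 0| + |x 1 - w 1| + |x 2 - w 2| + |x 3 - w 3| ≤ k := fun x _ =>
  lattice_box_covered_odd_general k a hk hko ha v₁ v₂ v₃ v₄ hv₁ hv₂ hv₃ hv₄ L hL x
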